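/- The difference-reflection operators realize the extended affine Hecke algebra relations: (i) for every j ∈ {0,…,n}, (T̂_j − τ_j)∘(T̂_j + τ_j⁻¹) = 0 as operators on functions V → ℂ; (ii) for all 0 ≤ j ≠ k ≤ n, if the order m of s_{a_j}s_{a_k} in W is finite, then the alternating products T̂_j∘T̂_k∘T̂_j∘⋯ and T̂_k∘T̂_j∘T̂_k∘⋯ with m factors on each side coincide; (iii) for every u ∈ Ω and j ∈ {0,…,n}, u∘T̂_j∘u⁻¹ = T̂_{u_j}, where u acts on functions by (u f)(x) := f(u⁻¹x). Consequently the assignment T_j ↦ T̂_j, T_u ↦ u extends uniquely to a representation of the extended affine Hecke algebra on the space of functions V → ℂ. -/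

import Mathlib

open scoped RealInnerProductSpace BigOperators Classical

noncomputable section

/-- Alternating composition `A ∘ B ∘ A ∘ ⋯` with `m` factors (starting with `A`). -/
def altComp {α : Type*} (A B : α → α) : ℕ → (α → α)
  | 0 => id
  | m + 1 => A ∘ altComp B A m

/-- The sign of a real number, as an integer (with `sgnZ 0 = 0`). -/
def sgnZ (x : ℝ) : ℤ := if 0 < x then 1 else if x < 0 then -1 else 0

/-- The function `v(x) = (1-t²)∫₀ˣ dy/(1-2t cos y+t²)`. -/
def mvfun (t x : ℝ) : ℝ :=
  (1 - t ^ 2) * ∫ y in (0:ℝ)..x, 1 / (1 - 2 * t * Real.cos y + t ^ 2)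

section AffineOps

variable {V : Type*} [NormedAddCommGroup V] [InnerProductSpace ℝ V]

/-- The coroot `α∨ = 2α/⟨α,α⟩`. -/
def coroot (α : V) : V := (2 / ⟪α, α⟫) • α

/-- The affine root `a = α∨ + r c` (encoded as the pair `(α, r)`), as an affine
function on `V`. -/
def aval (c : ℝ) (a : V × ℤ) (x : V) : ℝ := ⟪x, coroot a.1⟫ + a.2 * c

/-- The affine reflection `s_a(x) = x - a(x) α` attached to `a = α∨ + r c`. -/
def sAff (c : ℝ) (a : V × ℤ) (x : V) : V := x - aval c a x • a.1

/-- `w` maps the affine root `a` to the affine root `b`, i.e. `(wa)(x) = a(w⁻¹x) = b(x)`. -/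
def mapsRoot (c : ℝ) (w : Equiv.Perm V) (a b : V × ℤ) : Prop :=
  ∀ x : V, aval c a (w⁻¹ x) = aval c b x

/-- The linear part `w′` of an affine transformation `w`. -/
def linPart (w : Equiv.Perm V) (x : V) : V := w x - w 0

variable {R : Type*} [Field R]

/-- The difference-reflection operator `T̂_a`. -/
def hatT (c : ℝ) (τ : V × ℤ → R) (a : V × ℤ) (f : V → R) (x : V) : R :=
  if 0 < aval c a x then τ a * f (sAff c a x)
  else if aval c a x = 0 then τ a * f x
  else (τ a)⁻¹ * f (sAff c a x) + (τ a - (τ a)⁻¹) * f x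

/-- The discrete integral operator `J_a`. -/
def Jop (c : ℝ) (a : V × ℤ) (f : V → R) (x : V) : R :=
  if 0 < aval c a x then
    - ∑ k ∈ Finset.Icc (1 : ℤ) ⌊aval c a x⌋, f (x - k • a.1)
  else if aval c a x = 0 then 0
  else ∑ k ∈ Finset.Ico (0 : ℤ) (-⌊aval c a x⌋), f (x + k • a.1)

/-- The integral-reflection operator `I_a = τ_a s_a + (τ_a - τ_a⁻¹) J_a`. -/
def Iop (c : ℝ) (τ : V × ℤ → R) (a : V × ℤ) (f : V → R) (x : V) : R :=
  τ a * f (sAff c a x) + (τ a - (τ a)⁻¹) * Jop c a f x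

end AffineOps

/-- An irreducible reduced crystallographic root system spanning `V`, together with a
choice of positive roots, simple roots, and the highest short root. -/
structure RootSystemData (V : Type*) [NormedAddCommGroup V] [InnerProductSpace ℝ V] :
    Type _ where
  n : ℕ
  n_pos : 1 ≤ n
  rank_eq : Module.finrank ℝ V = n
  R0 : Finset V
  ne_zero : ∀ α ∈ R0, α ≠ (0 : V)
  span_top : Submodule.span ℝ (R0 : Set V) = ⊤
  reduced : ∀ α ∈ R0, ∀ t : ℝ, t • α ∈ R0 → t = 1 ∨ t = -1
  crystallographic : ∀ α ∈ R0, ∀ β ∈ R0, ∃ k : ℤ, ⟪β, coroot α⟫ = (k : ℝ)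
  reflect_mem : ∀ α ∈ R0, ∀ β ∈ R0, β - ⟪β, coroot α⟫ • α ∈ R0
  irreducible : ∀ S : Finset V, S ⊆ R0 →
      (∀ a ∈ S, ∀ b ∈ R0, b ∉ S → ⟪a, b⟫ = 0) → S = ∅ ∨ S = R0
  pos : Finset V
  pos_subset : pos ⊆ R0
  pos_or_neg : ∀ α ∈ R0, α ∈ pos ∨ -α ∈ pos
  pos_not_both : ∀ α ∈ pos, -α ∉ pos
  pos_add : ∀ α ∈ pos, ∀ β ∈ pos, α + β ∈ R0 → α + β ∈ pos
  simpleRoot : Fin n → V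
  simpleRoot_mem : ∀ j, simpleRoot j ∈ pos
  pos_natCombo : ∀ α ∈ pos, ∃ k : Fin n → ℕ, α = ∑ j, (k j : ℝ) • simpleRoot j
  hshort : V
  hshort_mem : hshort ∈ pos
  hshort_short : ∀ α ∈ R0, ‖hshort‖ ≤ ‖α‖
  hshort_highest : ∀ α ∈ R0, ‖α‖ = ‖hshort‖ →
      ∃ k : Fin n → ℕ, hshort - α = ∑ j, (k j : ℝ) • simpleRoot j

namespace RootSystemData

variable {V : Type*} [NormedAddCommGroup V] [InnerProductSpace ℝ V]
variable (D : RootSystemData V)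

/-- The weight lattice `P`. -/
def weightLattice : Set V :=
  {x : V | ∀ α ∈ D.R0, ∃ k : ℤ, ⟪x, coroot α⟫ = (k : ℝ)}

/-- The root lattice `Q`. -/
def rootLattice : Set V := (Submodule.span ℤ (D.R0 : Set V) : Set V)

/-- The coweight lattice `P∨`. -/
def coweightLattice : Set V :=
  {x : V | ∀ α ∈ D.R0, ∃ k : ℤ, ⟪x, α⟫ = (k : ℝ)}

/-- The dominant cone. -/
def dominant : Set V := {x : V | ∀ α ∈ D.pos, 0 ≤ ⟪x, coroot α⟫}

/-- `ω` is a minuscule (dominant) weight. -/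
def IsMinuscule (ω : V) : Prop :=
  ω ∈ D.weightLattice ∧ ω ∈ D.dominant ∧ ω ≠ 0 ∧
    ∀ α ∈ D.pos, ⟪ω, coroot α⟫ ≤ 1

/-- `ω` is the quasi-minuscule weight, i.e. the highest short root. -/
def IsQuasiMinuscule (ω : V) : Prop := ω = D.hshort

/-- The saturated set `P_ϑ` containing the (quasi-)minuscule weights. -/
def Ptheta : Set V :=
  {ν : V | ν ∈ D.weightLattice ∧ ∀ α ∈ D.R0, α ≠ ν → |⟪ν, coroot α⟫| ≤ 1}

/-- Half sum of the positive roots. -/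
def rhoHalf : V := (2⁻¹ : ℝ) • ∑ α ∈ D.pos, α

/-- Half sum of the positive coroots. -/
def rhoVee : V := (2⁻¹ : ℝ) • ∑ α ∈ D.pos, coroot α

/-- `(α, r)` encodes an affine root. -/
def IsAffRoot (a : V × ℤ) : Prop := a.1 ∈ D.R0

/-- `(α, r)` encodes a positive affine root. -/
def IsAffPos (a : V × ℤ) : Prop :=
  a.1 ∈ D.R0 ∧ (1 ≤ a.2 ∨ (a.2 = 0 ∧ a.1 ∈ D.pos))

/-- `(α, r)` encodes a negative affine root. -/
def IsAffNeg (a : V × ℤ) : Prop := D.IsAffPos (-a.1, -a.2)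

/-- The simple affine roots `a₀ = -ϑ∨ + c`, `a_j = α_j∨`. -/
def aSimple (j : Fin (D.n + 1)) : V × ℤ :=
  Fin.cons (α := fun _ => V × ℤ) (-D.hshort, (1 : ℤ))
    (fun i => (D.simpleRoot i, (0 : ℤ))) j

/-- The reflections generating the finite Weyl group `W₀`. -/
def W0Gens : Set (Equiv.Perm V) :=
  {e | ∃ α ∈ D.R0, ∀ x, e x = x - ⟪x, coroot α⟫ • α}

/-- The finite Weyl group `W₀`. -/
def W0 : Subgroup (Equiv.Perm V) := Subgroup.closure D.W0Gens

variable (c : ℝ)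

/-- The affine reflections generating the affine Weyl group `W_R`. -/
def AffGens : Set (Equiv.Perm V) :=
  {e | ∃ a : V × ℤ, D.IsAffRoot a ∧ ∀ x, e x = sAff c a x}

/-- The affine Weyl group `W_R`. -/
def WR : Subgroup (Equiv.Perm V) := Subgroup.closure (D.AffGens c)

/-- The translations `t_{cλ}`, `λ ∈ P`. -/
def TransGens : Set (Equiv.Perm V) :=
  {e | ∃ lam ∈ D.weightLattice, ∀ x : V, e x = x + c • lam}

/-- The extended affine Weyl group `W = W₀ ⋉ t(cP)`. -/
def Wext : Subgroup (Equiv.Perm V) :=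
  Subgroup.closure (D.AffGens c ∪ D.TransGens c)

/-- The set `R(w) = R⁺ ∩ w⁻¹(R⁻)`. -/
def RW (w : Equiv.Perm V) : Set (V × ℤ) :=
  {a | D.IsAffPos a ∧ ∃ b : V × ℤ, D.IsAffNeg b ∧ mapsRoot c w a b}

/-- The length `ℓ(w) = #R(w)`. -/
def len (w : Equiv.Perm V) : ℕ := (D.RW c w).ncard

/-- The closed fundamental alcove `A_c`. -/
def alcove : Set V := {x | ∀ a : V × ℤ, D.IsAffPos a → 0 ≤ aval c a x}

/-- `wmin x` is the unique shortest element of the affine Weyl group mapping `x` into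
the fundamental alcove. -/
def IsWmin (wmin : V → Equiv.Perm V) : Prop :=
  ∀ x : V, wmin x ∈ D.WR c ∧ (wmin x) x ∈ D.alcove c ∧
    ∀ w ∈ D.WR c, w x ∈ D.alcove c → D.len c (wmin x) < D.len c w ∨ w = wmin x

/-- One step in the Bruhat order: `w < w s_a` whenever `ℓ(w) < ℓ(w s_a)`. -/
def bruhatStep (w w' : Equiv.Perm V) : Prop :=
  ∃ a : V × ℤ, D.IsAffPos a ∧ ∃ e : Equiv.Perm V,
    (∀ x, e x = sAff c a x) ∧ w' = w * e ∧ D.len c w < D.len c w'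

/-- The Bruhat order on the affine Weyl group. -/
def bruhatLE (w w' : Equiv.Perm V) : Prop :=
  Relation.ReflTransGen (D.bruhatStep c) w w'

/-- The partial order on `V`: `x ≤ y` iff `x₊ = y₊` and `w_x ≤ w_y` (Bruhat). -/
def vle (wmin : V → Equiv.Perm V) (x y : V) : Prop :=
  (wmin x) x = (wmin y) y ∧ D.bruhatLE c (wmin x) (wmin y)

/-- The interval `[x, y]` for the order `vle`. -/
def vInterval (wmin : V → Equiv.Perm V) (x y : V) : Set V :=
  {z : V | D.vle c wmin x z ∧ D.vle c wmin z y}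

/-- The partial order `⪯` on the weight lattice:
`μ ⪯ λ` iff `λ - μ ∈ Q` and `Conv [μ₊, μ] ⊆ Conv [λ₊, λ]`. -/
def pleq (wmin : V → Equiv.Perm V) (μ lam : V) : Prop :=
  lam - μ ∈ D.rootLattice ∧
    convexHull ℝ (D.vInterval c wmin ((wmin μ) μ) μ)
      ⊆ convexHull ℝ (D.vInterval c wmin ((wmin lam) lam) lam)

section Ops

variable {R : Type*} [Field R]

/-- `τ` is a multiplicity function: nonvanishing on affine roots, and invariant
under the (extended affine) Weyl group action on the affine roots. -/
def IsMultiplicity (τ : V × ℤ → R) : Prop :=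
  (∀ a : V × ℤ, D.IsAffRoot a → τ a ≠ 0) ∧
    ∀ w ∈ D.Wext c, ∀ a b : V × ℤ, D.IsAffRoot a → D.IsAffRoot b →
      mapsRoot c w a b → τ a = τ b

/-- `τ_w = ∏_{a ∈ R(w)} τ_a`. -/
def tauw (τ : V × ℤ → R) (w : Equiv.Perm V) : R := ∏ᶠ a ∈ D.RW c w, τ a

/-- `τ₀`, the multiplicity of the affine simple root `a₀`. -/
def tauZero (τ : V × ℤ → R) : R := τ (-D.hshort, (1 : ℤ))

/-- The operator `I_{j₁} ∘ ⋯ ∘ I_{jℓ}` attached to a word in the simple reflections. -/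
def wordOp (τ : V × ℤ → R) (l : List (Fin (D.n + 1))) : (V → R) → V → R :=
  (l.map fun j => Iop c τ (D.aSimple j)).foldr (· ∘ ·) id

/-- `l` is a reduced word for `w`, i.e. `w = s_{j₁} ∘ ⋯ ∘ s_{jℓ}` with `ℓ = ℓ(w)`. -/
def IsReducedWord (w : Equiv.Perm V) (l : List (Fin (D.n + 1))) : Prop :=
  l.length = D.len c w ∧
    ∀ x : V, w x = ((l.map fun j => sAff c (D.aSimple j)).foldr (· ∘ ·) id) x

/-- `e∨_τ(η) = ∏_{α ∈ R₀⁺} τ_{α∨}^{⟨η,α∨⟩}`. -/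
def etau (τ : V × ℤ → R) (η : V) : R :=
  ∏ α ∈ D.pos, τ (α, (0 : ℤ)) ^ ⌊⟪η, coroot α⟫⌋

/-- `h∨_τ = τ₀² e∨_τ(ϑ)`. -/
def hvee (τ : V × ℤ → R) : R := D.tauZero τ ^ 2 * D.etau τ D.hshort

/-- `θ(μ) = #{b ∈ R(w_μ) : b(μ) = -2}`. -/
def theta (wmin : V → Equiv.Perm V) (μ : V) : ℕ :=
  {b : V × ℤ | b ∈ D.RW c (wmin μ) ∧ aval c b μ = -2}.ncard

/-- The coefficient `c_{λ,η} = θ(λ-η) e∨_τ(η) (h∨_τ)^{-sign⟨λ,η∨⟩}`. -/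
def ccoef (τ : V × ℤ → R) (wmin : V → Equiv.Perm V) (lam η : V) : R :=
  (D.theta c wmin (lam - η) : R) * D.etau τ η *
    D.hvee τ ^ (-sgnZ ⟪lam, coroot η⟫)

/-- The coefficient `a_{λ,ν} = τ_{w_{w_λ(λ-ν)}} τ_{w_{w_λ(λ-ν)} w_λ} τ_{w_λ}⁻¹`. -/
def acoef (τ : V × ℤ → R) (wmin : V → Equiv.Perm V) (lam ν : V) : R :=
  D.tauw c τ (wmin ((wmin lam) (lam - ν))) *
    D.tauw c τ (wmin ((wmin lam) (lam - ν)) * wmin lam) *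
    (D.tauw c τ (wmin lam))⁻¹

/-- The coefficient `b_{λ,ν}`. -/
def bcoef (τ : V × ℤ → R) (wmin : V → Equiv.Perm V) (lam ν : V) : R :=
  if (wmin (lam - ν)) (lam - ν) = (wmin lam) lam then
    D.tauw c τ (wmin ((wmin lam) (lam - ν))) ^ 2 *
      (if D.IsAffNeg (ν, ⌊(1 - ⟪lam, coroot ν⟫) / c⌋) then 1 else 0)
  else D.ccoef c τ wmin ((wmin lam) lam) (linPart (wmin lam) ν)

/-- The intertwining operator `(𝒥f)(λ) = τ_{w_λ}⁻¹ (I_{w_λ} f)(λ₊)`, where `Iw` assigns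
to each `w_λ` the composite of integral-reflection operators along a reduced word. -/
def Jcal (τ : V × ℤ → R) (wmin : V → Equiv.Perm V)
    (Iw : Equiv.Perm V → (V → R) → V → R) (f : V → R) (x : V) : R :=
  (D.tauw c τ (wmin x))⁻¹ * Iw (wmin x) f ((wmin x) x)

end Ops

/-- The Yang–Yang type Morse function `𝒱_μ`. -/
def morse (t : V → ℝ) (μ ξ : V) : ℝ :=
  (c / 2) * ⟪ξ, ξ⟫ - 2 * Real.pi * ⟪D.rhoVee + μ, ξ⟫ +
    ∑ α ∈ D.pos, (2 / ⟪α, α⟫) * ∫ x in (0:ℝ)..(⟪ξ, α⟫), mvfun (t α) x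

/-- The critical equation `cξ + ∑_{α>0} v_α(⟨ξ,α⟩) α∨ = 2π(ρ∨+μ)`. -/
def criticalEq (t : V → ℝ) (μ ξ : V) : Prop :=
  c • ξ + ∑ α ∈ D.pos, mvfun (t α) ⟪ξ, α⟫ • coroot α
    = (2 * Real.pi) • (D.rhoVee + μ)

/-- The Hessian bilinear form `H_{η,ζ}(ξ)`. -/
def hessForm (t : V → ℝ) (ξ η ζ : V) : ℝ :=
  c * ⟪η, ζ⟫ + ∑ α ∈ D.R0,
    (1 - t α ^ 2) * ⟪η, α⟫ * ⟪ζ, α⟫ /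
      (⟪α, α⟫ * (1 - 2 * t α * Real.cos ⟪ξ, α⟫ + t α ^ 2))

/-- `κ_± = (2/n) ∑_{α>0} (1-t_α²)/(1 ± |t_α|)²`; here `s = ±1`. -/
def kappaPM (t : V → ℝ) (s : ℝ) : ℝ :=
  (2 / (D.n : ℝ)) * ∑ α ∈ D.pos, (1 - t α ^ 2) / (1 + s * |t α|) ^ 2

end RootSystemData

/-! Where an affine root `a` is nonnegative, `T̂_a` acts as `τ_a s_a`. Hence at a point that is
dominant for two simple affine roots generating a dihedral group of order `2m`, both alternating
words of length `m` in the operators evaluate to the same multiple of `f` at the image of the point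
under the longest element. The quadratic relations carry the equality of the two words from `s_a x`
to `x` whenever `a x < 0`, and finitely many alternating reflections bring every point into the
dominant cone. Distinct simple affine roots have nonpositive inner product, so either their Cartan
integers are those of a rank two root system or their gradients are opposite, in which case the
product of the reflections is a nontrivial translation and has infinite order. Conjugation by an
element `u` of the extended affine Weyl group, an isometry, carries `s_a` to `s_{u a}` and hence
`T̂_a` to `T̂_{u a}`. -/

/-- The alternating product `a * b * a * ⋯` with `m` factors in a monoid, the analogue of
`altComp` in the monoids of operators, scalars and reflections. -/
def altProd {M : Type*} [Monoid M] (a b : M) : ℕ → M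
  | 0 => 1
  | m + 1 => a * altProd b a m

section AltProd

variable {M : Type*} [Monoid M]

lemma altProd_succ_right (a b : M) (m : ℕ) :
    altProd a b (m + 1) = altProd a b m * if Even m then a else b := by
  induction m generalizing a b with
  | zero => simp [altProd]
  | succ m ih =>
    rw [altProd, ih, altProd, mul_assoc]
    simp only [Nat.even_add_one, ite_not]

lemma altProd_two_mul (a b : M) (m : ℕ) : altProd a b (2 * m) = (a * b) ^ m := by
  induction m with
  | zero => rw [mul_zero, altProd, pow_zero]
  | succ m ih => rw [mul_add_one, altProd, altProd, ih, pow_succ', mul_assoc]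

lemma altProd_comm {M : Type*} [CommMonoid M] {a b : M} {m : ℕ} (h : Odd m → a = b) :
    altProd a b m = altProd b a m := by
  rcases Nat.even_or_odd' m with ⟨k, rfl | rfl⟩
  · rw [altProd_two_mul, altProd_two_mul, mul_comm]
  · rw [h (odd_two_mul_add_one k)]

lemma altProd_eq_pow_mul_altProd {s t : M} (hs : s * s = 1) (ht : t * t = 1) (m : ℕ) :
    altProd s t m = (s * t) ^ m * altProd t s m := by
  induction m generalizing s t with
  | zero => simp [altProd]
  | succ m ih =>
    have hpow : s * (t * s) ^ m = (s * t) ^ m * s := by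
      simpa only [SemiconjBy, mul_assoc] using
        (show SemiconjBy s (t * s) (s * t) from by simp only [SemiconjBy, mul_assoc]).pow_right m
    calc altProd s t (m + 1) = s * ((t * s) ^ m * altProd s t m) := by rw [altProd, ih ht hs]
      _ = (s * t) ^ m * (s * altProd s t m) := by rw [← mul_assoc, hpow, mul_assoc]
      _ = (s * t) ^ m * (s * (t * t) * altProd s t m) := by rw [ht, mul_one]
      _ = (s * t) ^ (m + 1) * altProd t s (m + 1) := by
        rw [pow_succ, altProd]
        simp only [mul_assoc]

lemma coe_altProd {K E : Type*} [Semiring K] [AddCommMonoid E] [Module K E]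
    (S T : Module.End K E) (m : ℕ) : ⇑(altProd S T m) = altComp S T m := by
  induction m generalizing S T with
  | zero => rfl
  | succ m ih => rw [altProd, altComp, ← ih]; rfl

end AltProd

section AffineReflections

variable {V : Type*} [NormedAddCommGroup V] [InnerProductSpace ℝ V]

lemma inner_coroot (x α : V) : ⟪x, coroot α⟫ = 2 * ⟪x, α⟫ / ⟪α, α⟫ := by
  rw [coroot, inner_smul_right, div_mul_eq_mul_div]

lemma inner_coroot_self {α : V} (hα : α ≠ 0) : ⟪α, coroot α⟫ = (2 : ℝ) := by
  rw [inner_coroot, mul_div_cancel_right₀ _ (inner_self_ne_zero.mpr hα)]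

lemma coroot_neg (α : V) : coroot (-α) = -coroot α := by
  rw [coroot, coroot, inner_neg_neg, smul_neg]

lemma coroot_coroot (α : V) : coroot (coroot α) = α := by
  rcases eq_or_ne α 0 with rfl | hα
  · simp [coroot]
  have hne : ⟪α, α⟫ ≠ (0 : ℝ) := inner_self_ne_zero.mpr hα
  rw [coroot, inner_coroot, coroot, real_inner_smul_left, smul_smul]
  convert one_smul ℝ α using 2
  field_simp

lemma map_coroot (L : V ≃ₗᵢ[ℝ] V) (α : V) : L (coroot α) = coroot (L α) := by
  rw [coroot, coroot, L.inner_map_map, map_smul]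

lemma sub_inner_coroot_smul_eq_reflection (x α : V) :
    x - ⟪x, coroot α⟫ • α = (ℝ ∙ α)ᗮ.reflection x := by
  rw [Submodule.reflection_orthogonal_apply, Submodule.reflection_singleton_apply, inner_coroot,
    real_inner_self_eq_norm_sq, real_inner_comm]
  simp only [RCLike.ofReal_real_eq_id, id_eq]
  module

lemma aval_add (c : ℝ) (a : V × ℤ) (x v : V) :
    aval c a (x + v) = aval c a x + ⟪v, coroot a.1⟫ := by
  rw [aval, aval, inner_add_left]
  ring

lemma aval_sAff (c : ℝ) (a b : V × ℤ) (x : V) :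
    aval c a (sAff c b x) = aval c a x - aval c b x * ⟪b.1, coroot a.1⟫ := by
  rw [sAff, sub_eq_add_neg, aval_add, inner_neg_left, real_inner_smul_left, sub_eq_add_neg]

lemma aval_sAff_self (c : ℝ) {a : V × ℤ} (ha : a.1 ≠ 0) (x : V) :
    aval c a (sAff c a x) = -aval c a x := by
  rw [aval_sAff, inner_coroot_self ha]
  ring

lemma sAff_of_aval_eq_zero {c : ℝ} {a : V × ℤ} {x : V} (hx : aval c a x = 0) :
    sAff c a x = x := by
  rw [sAff, hx, zero_smul, sub_zero]

lemma exists_aval_ne_zero (c : ℝ) {a : V × ℤ} (ha : a.1 ≠ 0) : ∃ x, aval c a x ≠ 0 := by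
  by_contra! h
  have := h (0 + a.1)
  rw [aval_add, h, inner_coroot_self ha] at this
  norm_num at this

lemma involutive_sAff (c : ℝ) (a : V × ℤ) : Function.Involutive (sAff c a) := by
  intro x
  rcases eq_or_ne a.1 0 with ha | ha
  · simp [sAff, ha]
  · rw [sAff, aval_sAff_self c ha, sAff]
    module

/-- The affine reflection `s_a` as an element of the group of permutations of `V`. -/
def affRefl (c : ℝ) (a : V × ℤ) : Equiv.Perm V := (involutive_sAff c a).toPerm

lemma affRefl_apply (c : ℝ) (a : V × ℤ) (x : V) : affRefl c a x = sAff c a x := rfl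

lemma affRefl_mul_self (c : ℝ) (a : V × ℤ) : affRefl c a * affRefl c a = 1 :=
  Equiv.ext (involutive_sAff c a)

lemma inv_affRefl_mul_apply (c : ℝ) (a : V × ℤ) (w : Equiv.Perm V) (x : V) :
    (affRefl c a * w)⁻¹ x = w⁻¹ (sAff c a x) := rfl

lemma orderOf_affRefl_mul_affRefl_eq {c : ℝ} {a b : V × ℤ} {m : ℕ} (hm : 0 < m)
    (hid : (fun x => sAff c a (sAff c b x))^[m] = id)
    (hmin : ∀ k, 0 < k → k < m → (fun x => sAff c a (sAff c b x))^[k] ≠ id) :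
    orderOf (affRefl c a * affRefl c b) = m := by
  have iterate_eq (k : ℕ) :
      (fun x => sAff c a (sAff c b x))^[k] = ⇑((affRefl c a * affRefl c b) ^ k) :=
    (affRefl c a * affRefl c b).iterate_eq_pow k
  simp only [iterate_eq] at hid hmin
  exact (orderOf_eq_iff hm).mpr
    ⟨Equiv.ext (congrFun hid), fun k hkm hk h => hmin k hk hkm (by rw [h]; rfl)⟩

lemma affRefl_mul_affRefl_of_eq_neg (c : ℝ) {a b : V × ℤ} (hab : a.1 = -b.1) :
    affRefl c a * affRefl c b = Equiv.addRight (-(((a.2 + b.2 : ℤ) * c) • a.1)) := by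
  ext x
  rcases eq_or_ne b.1 0 with hb | hb
  · simp [affRefl_apply, sAff, hab, hb]
  have hsum : aval c a x + aval c b x = (a.2 + b.2 : ℤ) * c := by
    rw [aval, aval, hab, coroot_neg, inner_neg_right]
    push_cast
    ring
  have haval : aval c a (sAff c b x) = aval c a x + 2 * aval c b x := by
    rw [aval_sAff, hab, coroot_neg, inner_neg_right, inner_coroot_self hb]
    ring
  rw [Equiv.Perm.mul_apply, affRefl_apply, affRefl_apply, Equiv.coe_addRight, ← hsum, sAff, haval,
    sAff, hab]
  module

lemma orderOf_affRefl_mul_affRefl_of_eq_neg {c : ℝ} (hc : c ≠ 0) {a b : V × ℤ} (ha : a.1 ≠ 0)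
    (hab : a.1 = -b.1) (hne : b ≠ -a) : orderOf (affRefl c a * affRefl c b) = 0 := by
  have hlevel : a.2 + b.2 ≠ 0 := fun h =>
    hne (Prod.ext (by rw [Prod.fst_neg, hab, neg_neg]) (eq_neg_of_add_eq_zero_right h))
  rw [orderOf_eq_zero_iff']
  intro m hm h
  rw [affRefl_mul_affRefl_of_eq_neg c hab] at h
  have h0 := congrFun (congrArg DFunLike.coe h) 0
  rw [← Equiv.Perm.iterate_eq_pow, Equiv.coe_addRight, add_right_iterate_apply, zero_add,
    Equiv.Perm.one_apply, smul_neg, neg_eq_zero, ← Nat.cast_smul_eq_nsmul ℝ, smul_eq_zero,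
    smul_eq_zero, mul_eq_zero, Nat.cast_eq_zero, Int.cast_eq_zero] at h0
  have hm0 := hm.ne'
  tauto

end AffineReflections

section RankTwo

variable {V : Type*} [NormedAddCommGroup V] [InnerProductSpace ℝ V]

/-- `HasCoxeterExponent α β m`: the Cartan integers of `α` and `β` are those of two simple roots
of the rank two root system `A₁ × A₁`, `A₂`, `B₂` or `G₂`, whose reflections have a product of
order `m`. -/
inductive HasCoxeterExponent (α β : V) : ℕ → Prop
  | two : ⟪α, coroot β⟫ = (0 : ℝ) → ⟪β, coroot α⟫ = (0 : ℝ) → HasCoxeterExponent α β 2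
  | three : ⟪α, coroot β⟫ = (-1 : ℝ) → ⟪β, coroot α⟫ = (-1 : ℝ) → HasCoxeterExponent α β 3
  | four : ⟪α, coroot β⟫ = (-1 : ℝ) → ⟪β, coroot α⟫ = (-2 : ℝ) → HasCoxeterExponent α β 4
  | four' : ⟪α, coroot β⟫ = (-2 : ℝ) → ⟪β, coroot α⟫ = (-1 : ℝ) → HasCoxeterExponent α β 4
  | six : ⟪α, coroot β⟫ = (-1 : ℝ) → ⟪β, coroot α⟫ = (-3 : ℝ) → HasCoxeterExponent α β 6
  | six' : ⟪α, coroot β⟫ = (-3 : ℝ) → ⟪β, coroot α⟫ = (-1 : ℝ) → HasCoxeterExponent α β 6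

namespace HasCoxeterExponent

variable {α β : V} {m : ℕ}

lemma symm (h : HasCoxeterExponent α β m) : HasCoxeterExponent β α m := by
  cases h with
  | two h₁ h₂ => exact two h₂ h₁
  | three h₁ h₂ => exact three h₂ h₁
  | four h₁ h₂ => exact four' h₂ h₁
  | four' h₁ h₂ => exact four h₂ h₁
  | six h₁ h₂ => exact six' h₂ h₁
  | six' h₁ h₂ => exact six h₂ h₁

lemma pos (h : HasCoxeterExponent α β m) : 0 < m := by
  cases h <;> norm_num

lemma inner_coroot_eq_neg_one (h : HasCoxeterExponent α β m) (hm : Odd m) :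
    ⟪α, coroot β⟫ = (-1 : ℝ) := by
  cases h with
  | three h₁ _ => exact h₁
  | _ => exact absurd hm (by decide)

end HasCoxeterExponent

lemma sAff_sub_smul_sub_smul (c : ℝ) {a : V × ℤ} (ha : a.1 ≠ 0) (x β : V) (u v : ℝ) :
    sAff c a (x - u • a.1 - v • β)
      = x - (aval c a x - u - v * ⟪β, coroot a.1⟫) • a.1 - v • β := by
  have haval : aval c a (x - u • a.1 - v • β) = aval c a x - 2 * u - v * ⟪β, coroot a.1⟫ := by
    rw [sub_sub, sub_eq_add_neg, aval_add, inner_neg_left, inner_add_left, real_inner_smul_left,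
      real_inner_smul_left, inner_coroot_self ha]
    ring
  rw [sAff, haval]
  module

lemma HasCoxeterExponent.pow_affRefl_mul_affRefl (c : ℝ) {a b : V × ℤ} {m : ℕ}
    (h : HasCoxeterExponent a.1 b.1 m) (ha : a.1 ≠ 0) (hb : b.1 ≠ 0) :
    (affRefl c a * affRefl c b) ^ m = 1 := by
  ext x
  have hs := sAff_sub_smul_sub_smul c ha x b.1
  have ht (u v : ℝ) : sAff c b (x - u • a.1 - v • b.1)
      = x - u • a.1 - (aval c b x - v - u * ⟪a.1, coroot b.1⟫) • b.1 := by
    rw [sub_right_comm, sAff_sub_smul_sub_smul c hb, sub_right_comm]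
  have hx : x = x - (0 : ℝ) • a.1 - (0 : ℝ) • b.1 := by simp
  rw [Equiv.Perm.one_apply]
  conv_lhs => rw [hx]
  cases h with | _ h₁ h₂ =>
    simp only [pow_succ, pow_zero, one_mul, Equiv.Perm.mul_apply, affRefl_apply, hs, ht, h₁, h₂]
    module

lemma HasCoxeterExponent.orderOf_affRefl_mul_affRefl (c : ℝ) {a b : V × ℤ} {m : ℕ}
    (h : HasCoxeterExponent a.1 b.1 m) (ha : a.1 ≠ 0) (hb : b.1 ≠ 0) :
    orderOf (affRefl c a * affRefl c b) = m := by
  refine (orderOf_eq_iff h.pos).mpr ⟨h.pow_affRefl_mul_affRefl c ha hb, fun k hkm hk hpow => ?_⟩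
  obtain ⟨x, hx⟩ := exists_aval_ne_zero c ha
  have hfix : ((affRefl c a * affRefl c b) ^ k) x = x := by rw [hpow, Equiv.Perm.one_apply]
  have ha_fix := congrArg (aval c a) hfix
  have hb_fix := congrArg (aval c b) hfix
  cases h with | _ h₁ h₂ =>
    interval_cases k <;>
      simp only [pow_succ, pow_zero, one_mul, Equiv.Perm.mul_apply, affRefl_apply,
        aval_sAff, inner_coroot_self ha, inner_coroot_self hb, h₁, h₂] at ha_fix hb_fix <;>
      exact hx (by linarith)

/-- The values at `x` of the affine roots `a`, `s_a b`, `s_a s_b a`, …, which, when `a` and `b` are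
the simple roots of a finite dihedral subsystem, are its positive roots in convex order followed by
its negative roots. -/
def altVal (c : ℝ) (a b : V × ℤ) : ℕ → V → ℝ
  | 0, x => aval c a x
  | i + 1, x => altVal c b a i (sAff c a x)

lemma HasCoxeterExponent.altVal_nonneg {c : ℝ} {a b : V × ℤ} {m : ℕ}
    (h : HasCoxeterExponent a.1 b.1 m) (ha : a.1 ≠ 0) (hb : b.1 ≠ 0) {x : V}
    (hax : 0 ≤ aval c a x) (hbx : 0 ≤ aval c b x) {i : ℕ} (hi : i < m) :
    0 ≤ altVal c a b i x := by
  cases h with | _ h₁ h₂ =>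
    interval_cases i <;>
      simp only [altVal, aval_sAff, inner_coroot_self ha, inner_coroot_self hb, h₁, h₂] <;>
      linarith

lemma HasCoxeterExponent.exists_altVal_nonneg (c : ℝ) {a b : V × ℤ} {m : ℕ}
    (h : HasCoxeterExponent a.1 b.1 m) (ha : a.1 ≠ 0) (hb : b.1 ≠ 0) (x : V) :
    ∃ i, 0 ≤ altVal c a b i x := by
  by_contra! hneg
  have h0 := hneg 0
  have hm := hneg m
  cases h with | _ h₁ h₂ =>
    simp only [altVal, aval_sAff, inner_coroot_self ha, inner_coroot_self hb, h₁, h₂] at h0 hm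
    linarith

/- If `P` failed at `x`, it would fail along the orbit of `x` under alternating reflections, so that
no point of that orbit would be dominant and all alternating values at `x` would be negative. -/
lemma HasCoxeterExponent.induction_dominant {c : ℝ} {a b : V × ℤ} {m : ℕ}
    (h : HasCoxeterExponent a.1 b.1 m) (ha : a.1 ≠ 0) (hb : b.1 ≠ 0) {P : V → Prop}
    (dominant : ∀ x, 0 ≤ aval c a x → 0 ≤ aval c b x → P x)
    (step_a : ∀ x, aval c a x < 0 → P (sAff c a x) → P x)
    (step_b : ∀ x, aval c b x < 0 → P (sAff c b x) → P x) (x : V) : P x := by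
  have altVal_neg (i : ℕ) : ∀ y, ¬P y →
      (aval c a y < 0 → altVal c a b i y < 0) ∧ (aval c b y < 0 → altVal c b a i y < 0) := by
    induction i with
    | zero => exact fun y _ => ⟨id, id⟩
    | succ i ih =>
      refine fun y hy => ⟨fun hay => ?_, fun hby => ?_⟩
      · have hPs : ¬P (sAff c a y) := mt (step_a y hay) hy
        refine (ih _ hPs).2 (lt_of_not_ge fun hbs => hPs (dominant _ ?_ hbs))
        rw [aval_sAff_self c ha]
        exact (neg_pos.mpr hay).le
      · have hPs : ¬P (sAff c b y) := mt (step_b y hby) hy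
        refine (ih _ hPs).1 (lt_of_not_ge fun has => hPs (dominant _ has ?_))
        rw [aval_sAff_self c hb]
        exact (neg_pos.mpr hby).le
  by_contra hx
  rcases lt_or_ge (aval c a x) 0 with hax | hax
  · obtain ⟨i, hi⟩ := h.exists_altVal_nonneg c ha hb x
    exact hi.not_gt ((altVal_neg i x hx).1 hax)
  · rcases lt_or_ge (aval c b x) 0 with hbx | hbx
    · obtain ⟨i, hi⟩ := h.symm.exists_altVal_nonneg c hb ha x
      exact hi.not_gt ((altVal_neg i x hx).2 hbx)
    · exact hx (dominant x hax hbx)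

end RankTwo

section DifferenceReflection

variable {V K : Type*} [NormedAddCommGroup V] [InnerProductSpace ℝ V] [Field K]

lemma hatT_of_nonneg {c : ℝ} (τ : V × ℤ → K) {a : V × ℤ} {x : V} (hx : 0 ≤ aval c a x)
    (f : V → K) : hatT c τ a f x = τ a * f (sAff c a x) := by
  rcases hx.eq_or_lt with h | h
  · rw [hatT, if_neg h.not_lt, if_pos h.symm, sAff_of_aval_eq_zero h.symm]
  · rw [hatT, if_pos h]

lemma hatT_of_neg {c : ℝ} (τ : V × ℤ → K) {a : V × ℤ} {x : V} (hx : aval c a x < 0) (f : V → K) :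
    hatT c τ a f x = (τ a)⁻¹ * f (sAff c a x) + (τ a - (τ a)⁻¹) * f x := by
  rw [hatT, if_neg hx.not_gt, if_neg hx.ne]

/-- The difference-reflection operator `T̂_a` as an element of the algebra of linear operators on
functions, in which the Hecke algebra relations are identities between products. -/
def hatTEnd (c : ℝ) (τ : V × ℤ → K) (a : V × ℤ) : Module.End K (V → K) where
  toFun := hatT c τ a
  map_add' f g := by
    ext x
    rcases le_or_gt 0 (aval c a x) with hx | hx
    · simp only [Pi.add_apply, hatT_of_nonneg τ hx]
      ring
    · simp only [Pi.add_apply, hatT_of_neg τ hx]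
      ring
  map_smul' r f := by
    ext x
    rcases le_or_gt 0 (aval c a x) with hx | hx
    · simp only [Pi.smul_apply, smul_eq_mul, RingHom.id_apply, hatT_of_nonneg τ hx]
      ring
    · simp only [Pi.smul_apply, smul_eq_mul, RingHom.id_apply, hatT_of_neg τ hx]
      ring

lemma hatTEnd_apply (c : ℝ) (τ : V × ℤ → K) (a : V × ℤ) (f : V → K) :
    hatTEnd c τ a f = hatT c τ a f := rfl

lemma coe_hatTEnd (c : ℝ) (τ : V × ℤ → K) (a : V × ℤ) : ⇑(hatTEnd c τ a) = hatT c τ a := rfl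

lemma hatTEnd_mul_self (c : ℝ) {τ : V × ℤ → K} {a : V × ℤ} (ha : a.1 ≠ 0) (hτ : τ a ≠ 0) :
    hatTEnd c τ a * hatTEnd c τ a = (τ a - (τ a)⁻¹) • hatTEnd c τ a + 1 := by
  ext1 f
  funext x
  simp only [Module.End.mul_apply, LinearMap.add_apply, LinearMap.smul_apply, Module.End.one_apply,
    Pi.add_apply, Pi.smul_apply, smul_eq_mul, hatTEnd_apply]
  have hs := involutive_sAff c a x
  rcases lt_trichotomy (aval c a x) 0 with h | h | h
  · have h' : 0 ≤ aval c a (sAff c a x) := by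
      rw [aval_sAff_self c ha]
      exact (neg_pos.mpr h).le
    rw [hatT_of_neg τ h, hatT_of_neg τ h, hatT_of_nonneg τ h', hs]
    field_simp
    ring
  · have hx := sAff_of_aval_eq_zero h
    rw [hatT_of_nonneg τ h.ge, hatT_of_nonneg τ h.ge, hx, hatT_of_nonneg τ h.ge, hx]
    field_simp
    ring
  · have h' : aval c a (sAff c a x) < 0 := by
      rw [aval_sAff_self c ha]
      exact neg_neg_iff_pos.mpr h
    rw [hatT_of_nonneg τ h.le, hatT_of_nonneg τ h.le, hatT_of_neg τ h', hs]
    field_simp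
    ring

lemma hatT_hatT_add_sub_eq_zero (c : ℝ) {τ : V × ℤ → K} {a : V × ℤ} (ha : a.1 ≠ 0) (hτ : τ a ≠ 0)
    (f : V → K) (x : V) :
    hatT c τ a (fun y => hatT c τ a f y + (τ a)⁻¹ * f y) x
      - τ a * (hatT c τ a f x + (τ a)⁻¹ * f x) = 0 := by
  have factored : (hatTEnd c τ a - τ a • 1) * (hatTEnd c τ a + (τ a)⁻¹ • 1) = 0 := by
    rw [sub_mul, mul_add, hatTEnd_mul_self c ha hτ, smul_mul_assoc, one_mul, mul_smul_one, smul_add,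
      smul_inv_smul₀ hτ]
    module
  exact congrFun (LinearMap.congr_fun factored f) x

lemma altProd_hatTEnd_apply_of_altVal_nonneg {c : ℝ} (τ : V × ℤ → K) {a b : V × ℤ} {m : ℕ} {x : V}
    (hx : ∀ i < m, 0 ≤ altVal c a b i x) (f : V → K) :
    altProd (hatTEnd c τ a) (hatTEnd c τ b) m f x
      = altProd (τ a) (τ b) m * f ((altProd (affRefl c a) (affRefl c b) m)⁻¹ x) := by
  induction m generalizing a b x with
  | zero => simp [altProd]
  | succ m ih =>
    rw [altProd, altProd, altProd, inv_affRefl_mul_apply, Module.End.mul_apply, hatTEnd_apply,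
      hatT_of_nonneg τ (hx 0 m.succ_pos), ih fun i hi => hx (i + 1) (Nat.succ_lt_succ hi),
      mul_assoc]

/- If `W = T̂_a U` and `W' = U T'`, then `T̂_a W' = W T'`, so the quadratic relations express both
`T̂_a W'` and `T̂_a W` at `s_a x` through the same data, while `T̂_a` acts there as `τ_a s_a`. -/
lemma apply_eq_of_apply_sAff_eq {c : ℝ} {τ : V × ℤ → K} {a : V × ℤ} (ha : a.1 ≠ 0) (hτ : τ a ≠ 0)
    {W W' U T' : Module.End K (V → K)} (hW : W = hatTEnd c τ a * U) (hW' : W' = U * T')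
    (hT' : T' * T' = (τ a - (τ a)⁻¹) • T' + 1) {x : V} (hx : aval c a x < 0)
    (h : ∀ f, W f (sAff c a x) = W' f (sAff c a x)) (f : V → K) : W f x = W' f x := by
  have hpos : 0 ≤ aval c a (sAff c a x) := by
    rw [aval_sAff_self c ha]
    exact (neg_pos.mpr hx).le
  have hatT_apply (g : V → K) : hatT c τ a g (sAff c a x) = τ a * g x := by
    rw [hatT_of_nonneg τ hpos, involutive_sAff c a x]
  have hTW : hatTEnd c τ a * W = (τ a - (τ a)⁻¹) • W + U := by
    rw [hW, ← mul_assoc, hatTEnd_mul_self c ha hτ, add_mul, one_mul, smul_mul_assoc]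
  have hW'T' : W' * T' = (τ a - (τ a)⁻¹) • W' + U := by
    rw [hW', mul_assoc, hT', mul_add, mul_one, mul_smul_comm]
  refine mul_left_cancel₀ hτ ?_
  calc τ a * W f x = (hatTEnd c τ a * W) f (sAff c a x) := (hatT_apply _).symm
    _ = (τ a - (τ a)⁻¹) * W f (sAff c a x) + U f (sAff c a x) := by rw [hTW]; rfl
    _ = (W' * T') f (sAff c a x) := by rw [h, hW'T']; rfl
    _ = (W * T') f (sAff c a x) := (h (T' f)).symm
    _ = (hatTEnd c τ a * W') f (sAff c a x) := by rw [hW, hW', mul_assoc]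
    _ = τ a * W' f x := hatT_apply _

lemma apply_altProd_hatTEnd_eq_of_apply_sAff_eq {c : ℝ} {τ : V × ℤ → K} {a b : V × ℤ}
    (ha : a.1 ≠ 0) (hb : b.1 ≠ 0) (hτa : τ a ≠ 0) (hτb : τ b ≠ 0) {m : ℕ} (hm : 0 < m)
    (hτ : Odd m → τ a = τ b) {x : V} (hx : aval c a x < 0)
    (h : ∀ f, altProd (hatTEnd c τ a) (hatTEnd c τ b) m f (sAff c a x)
      = altProd (hatTEnd c τ b) (hatTEnd c τ a) m f (sAff c a x)) (f : V → K) :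
    altProd (hatTEnd c τ a) (hatTEnd c τ b) m f x
      = altProd (hatTEnd c τ b) (hatTEnd c τ a) m f x := by
  obtain ⟨n, rfl⟩ := Nat.exists_eq_succ_of_ne_zero hm.ne'
  refine apply_eq_of_apply_sAff_eq ha hτa rfl (altProd_succ_right _ _ n) ?_ hx h f
  split_ifs with hn
  · rw [hτ hn.add_one]
    exact hatTEnd_mul_self c hb hτb
  · exact hatTEnd_mul_self c ha hτa

theorem altProd_hatTEnd_comm {c : ℝ} {τ : V × ℤ → K} {a b : V × ℤ} {m : ℕ}
    (hm : HasCoxeterExponent a.1 b.1 m) (ha : a.1 ≠ 0) (hb : b.1 ≠ 0) (hτa : τ a ≠ 0)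
    (hτb : τ b ≠ 0) (hτ : Odd m → τ a = τ b) :
    altProd (hatTEnd c τ a) (hatTEnd c τ b) m = altProd (hatTEnd c τ b) (hatTEnd c τ a) m := by
  have words_eq :
      altProd (affRefl c a) (affRefl c b) m = altProd (affRefl c b) (affRefl c a) m := by
    rw [altProd_eq_pow_mul_altProd (affRefl_mul_self c a) (affRefl_mul_self c b),
      hm.pow_affRefl_mul_affRefl c ha hb, one_mul]
  suffices h : ∀ x f, altProd (hatTEnd c τ a) (hatTEnd c τ b) m f x
      = altProd (hatTEnd c τ b) (hatTEnd c τ a) m f x from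
    LinearMap.ext fun f => funext fun x => h x f
  refine hm.induction_dominant (c := c) ha hb (fun x hax hbx f => ?_) (fun x hx h f => ?_)
    fun x hx h f => ?_
  · rw [altProd_hatTEnd_apply_of_altVal_nonneg τ fun i hi => hm.altVal_nonneg ha hb hax hbx hi,
      altProd_hatTEnd_apply_of_altVal_nonneg τ fun i hi => hm.symm.altVal_nonneg hb ha hbx hax hi,
      altProd_comm hτ, words_eq]
  · exact apply_altProd_hatTEnd_eq_of_apply_sAff_eq ha hb hτa hτb hm.pos hτ hx h f
  · exact (apply_altProd_hatTEnd_eq_of_apply_sAff_eq hb ha hτb hτa hm.pos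
      (fun hodd => (hτ hodd).symm) hx (fun g => (h g).symm) f).symm

end DifferenceReflection

section Cartan

variable {V : Type*} [NormedAddCommGroup V] [InnerProductSpace ℝ V]

lemma inner_coroot_nonpos_iff {α β : V} (hβ : β ≠ 0) :
    ⟪α, coroot β⟫ ≤ (0 : ℝ) ↔ ⟪α, β⟫ ≤ (0 : ℝ) := by
  rw [inner_coroot, div_le_iff₀ (real_inner_self_pos.mpr hβ), zero_mul]
  constructor <;> intro h <;> linarith

lemma inner_coroot_eq_zero_iff {α β : V} (hβ : β ≠ 0) :
    ⟪α, coroot β⟫ = (0 : ℝ) ↔ ⟪α, β⟫ = (0 : ℝ) := by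
  rw [inner_coroot, div_eq_zero_iff, or_iff_left (inner_self_ne_zero.mpr hβ), mul_eq_zero,
    or_iff_right two_ne_zero]

lemma inner_coroot_mul_inner_coroot_lt_four {α β : V} (hα : α ≠ 0) (hβ : β ≠ 0)
    (h : ⟪α, β⟫ ≤ (0 : ℝ)) (hne : ‖β‖ • α ≠ -(‖α‖ • β)) :
    ⟪α, coroot β⟫ * ⟪β, coroot α⟫ < (4 : ℝ) := by
  have cauchy_schwarz : -⟪α, β⟫ < ‖α‖ * ‖β‖ := by
    rw [← inner_neg_right, ← norm_neg β, inner_lt_norm_mul_iff_real, norm_neg, smul_neg]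
    exact hne
  have hsq : ⟪α, β⟫ ^ 2 < ⟪α, α⟫ * ⟪β, β⟫ := by
    rw [real_inner_self_eq_norm_sq, real_inner_self_eq_norm_sq, ← mul_pow, ← neg_sq]
    exact pow_lt_pow_left₀ cauchy_schwarz (neg_nonneg.mpr h) two_ne_zero
  have hα' : (0 : ℝ) < ⟪α, α⟫ := real_inner_self_pos.mpr hα
  have hβ' : (0 : ℝ) < ⟪β, β⟫ := real_inner_self_pos.mpr hβ
  rw [inner_coroot, inner_coroot, real_inner_comm α β, div_mul_div_comm,
    div_lt_iff₀ (mul_pos hβ' hα')]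
  linarith

lemma exists_hasCoxeterExponent_of_mul_lt_four {α β : V} {p q : ℤ}
    (hp : ⟪α, coroot β⟫ = (p : ℝ)) (hq : ⟪β, coroot α⟫ = (q : ℝ)) (hp0 : p ≤ 0) (hq0 : q ≤ 0)
    (hpq : p = 0 ↔ q = 0) (hlt : p * q < 4) : ∃ m, HasCoxeterExponent α β m := by
  rcases hp0.eq_or_lt with rfl | hp_neg
  · obtain rfl := hpq.mp rfl
    exact ⟨2, .two (by simpa using hp) (by simpa using hq)⟩
  have hq_neg : q < 0 := hq0.lt_of_ne (mt hpq.mpr hp_neg.ne)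
  have hp3 : -3 ≤ p := by nlinarith
  have hq3 : -3 ≤ q := by nlinarith
  have hpairs : (p = -1 ∧ q = -1) ∨ (p = -1 ∧ q = -2) ∨ (p = -2 ∧ q = -1) ∨
      (p = -1 ∧ q = -3) ∨ (p = -3 ∧ q = -1) := by
    interval_cases p <;> interval_cases q <;> simp_all
  rcases hpairs with ⟨rfl, rfl⟩ | ⟨rfl, rfl⟩ | ⟨rfl, rfl⟩ | ⟨rfl, rfl⟩ | ⟨rfl, rfl⟩ <;>
    push_cast at hp hq
  · exact ⟨3, .three hp hq⟩
  · exact ⟨4, .four hp hq⟩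
  · exact ⟨4, .four' hp hq⟩
  · exact ⟨6, .six hp hq⟩
  · exact ⟨6, .six' hp hq⟩

end Cartan

section Isometries

variable {V : Type*} [NormedAddCommGroup V] [InnerProductSpace ℝ V] {c : ℝ} {a b : V × ℤ}

lemma isometry_sAff (c : ℝ) (a : V × ℤ) : Isometry (sAff c a) := by
  refine Isometry.of_dist_eq fun x y => ?_
  have hsub : sAff c a x - sAff c a y = (ℝ ∙ a.1)ᗮ.reflection (x - y) := by
    rw [← sub_inner_coroot_smul_eq_reflection, sAff, sAff, aval, aval, inner_sub_left]
    module
  rw [dist_eq_norm, dist_eq_norm, hsub, LinearIsometryEquiv.norm_map]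

lemma apply_sAff_inv_apply_of_mapsRoot {u : Equiv.Perm V} (hu : Isometry u)
    (h : mapsRoot c u a b) (x : V) : u (sAff c a (u⁻¹ x)) = sAff c b x := by
  let E : V ≃ᵃⁱ[ℝ] V := (IsometryEquiv.mk u hu).toRealAffineIsometryEquiv
  let L : V ≃ₗᵢ[ℝ] V := E.linearIsometryEquiv
  have apply_add (y v : V) : u (y + v) = u y + L v := by
    rw [add_comm y v, add_comm (u y)]
    exact E.map_vadd y v
  have aval_apply (y : V) : aval c b (u y) = aval c a y := by
    rw [← h, Equiv.Perm.inv_def, Equiv.symm_apply_apply]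
  have map_coroot_eq : L (coroot a.1) = coroot b.1 := by
    refine ext_inner_left ℝ (L.surjective.forall.mpr fun v => ?_)
    have hv := aval_apply (0 + v)
    rw [apply_add, aval_add, aval_add, aval_apply, add_right_inj] at hv
    rw [L.inner_map_map, hv]
  have map_root_eq : L a.1 = b.1 := by
    rw [← coroot_coroot a.1, map_coroot, map_coroot_eq, coroot_coroot]
  rw [sAff, sub_eq_add_neg, apply_add, h, Equiv.Perm.inv_def, Equiv.apply_symm_apply, map_neg,
    map_smul, map_root_eq, ← sub_eq_add_neg, sAff]

lemma mapsRoot_affRefl_mul_affRefl (ha : a.1 ≠ 0) (hab : ⟪a.1, coroot b.1⟫ = (-1 : ℝ))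
    (hba : ⟪b.1, coroot a.1⟫ = (-1 : ℝ)) : mapsRoot c (affRefl c a * affRefl c b) a b := by
  intro x
  change aval c a (sAff c b (sAff c a x)) = aval c b x
  rw [aval_sAff, aval_sAff_self c ha, aval_sAff, hab, hba]
  ring

lemma hatT_inv_apply_of_mapsRoot {K : Type*} [Field K] {τ : V × ℤ → K} {u : Equiv.Perm V}
    (hu : Isometry u) (h : mapsRoot c u a b) (hτ : τ a = τ b) (f : V → K) (x : V) :
    hatT c τ a (fun y => f (u y)) (u⁻¹ x) = hatT c τ b f x := by
  rw [hatT, hatT, h, apply_sAff_inv_apply_of_mapsRoot hu h, hτ, Equiv.Perm.inv_def,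
    Equiv.apply_symm_apply]

end Isometries

namespace RootSystemData

variable {V : Type*} [NormedAddCommGroup V] [InnerProductSpace ℝ V] (D : RootSystemData V)

lemma neg_mem {α : V} (hα : α ∈ D.R0) : -α ∈ D.R0 := by
  have hmem := D.reflect_mem α hα α hα
  rw [inner_coroot_self (D.ne_zero α hα), two_smul, sub_add_cancel_left] at hmem
  exact hmem

lemma isAffRoot_aSimple (j : Fin (D.n + 1)) : D.IsAffRoot (D.aSimple j) := by
  cases j using Fin.cases with
  | zero => exact D.neg_mem (D.pos_subset D.hshort_mem)
  | succ i => exact D.pos_subset (D.simpleRoot_mem i)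

lemma eq_neg_or_exists_hasCoxeterExponent {α β : V} (hα : α ∈ D.R0) (hβ : β ∈ D.R0)
    (h : ⟪α, β⟫ ≤ (0 : ℝ)) : α = -β ∨ ∃ m, HasCoxeterExponent α β m := by
  have hα0 := D.ne_zero α hα
  have hβ0 := D.ne_zero β hβ
  rcases eq_or_ne (‖β‖ • α) (-(‖α‖ • β)) with hprop | hne
  · left
    have hsmul : (-(‖α‖ / ‖β‖)) • β = α := by
      rw [neg_smul, div_eq_inv_mul, mul_smul, ← smul_neg, ← hprop,
        inv_smul_smul₀ (norm_ne_zero_iff.mpr hβ0)]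
    have hpos : 0 < ‖α‖ / ‖β‖ := div_pos (norm_pos_iff.mpr hα0) (norm_pos_iff.mpr hβ0)
    rcases D.reduced β hβ _ (hsmul ▸ hα) with h1 | h1
    · linarith
    · rw [← hsmul, h1, neg_one_smul]
  · right
    obtain ⟨p, hp⟩ := D.crystallographic β hβ α hα
    obtain ⟨q, hq⟩ := D.crystallographic α hα β hβ
    have hlt := inner_coroot_mul_inner_coroot_lt_four hα0 hβ0 h hne
    have hp0 := (inner_coroot_nonpos_iff hβ0).mpr h
    have hq0 := (inner_coroot_nonpos_iff hα0).mpr (real_inner_comm α β ▸ h)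
    have hpq : ⟪α, coroot β⟫ = (0 : ℝ) ↔ ⟪β, coroot α⟫ = (0 : ℝ) := by
      rw [inner_coroot_eq_zero_iff hβ0, inner_coroot_eq_zero_iff hα0, real_inner_comm]
    rw [hp, hq] at hlt hpq
    rw [hp] at hp0
    rw [hq] at hq0
    exact exists_hasCoxeterExponent_of_mul_lt_four hp hq (by exact_mod_cast hp0)
      (by exact_mod_cast hq0) (by exact_mod_cast hpq) (by exact_mod_cast hlt)

lemma top_le_span_simpleRoot : ⊤ ≤ Submodule.span ℝ (Set.range D.simpleRoot) := by
  have mem_of_pos : ∀ α ∈ D.pos, α ∈ Submodule.span ℝ (Set.range D.simpleRoot) := by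
    intro α hα
    obtain ⟨k, rfl⟩ := D.pos_natCombo α hα
    exact sum_mem fun j _ => Submodule.smul_mem _ _ (Submodule.subset_span ⟨j, rfl⟩)
  rw [← D.span_top, Submodule.span_le]
  intro α hα
  rcases D.pos_or_neg α hα with hpos | hneg
  · exact mem_of_pos α hpos
  · exact (Submodule.neg_mem_iff _).mp (mem_of_pos _ hneg)

/-- The basis of `V` formed by the simple roots, used to read off the sign of a root from its
coordinates. -/
def simpleBasis : Module.Basis (Fin D.n) ℝ V :=
  basisOfTopLeSpanOfCardEqFinrank D.simpleRoot D.top_le_span_simpleRoot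
    (by rw [Fintype.card_fin, D.rank_eq])

lemma coord_simpleRoot (i j : Fin D.n) :
    D.simpleBasis.coord i (D.simpleRoot j) = if j = i then 1 else 0 := by
  have hj : D.simpleBasis j = D.simpleRoot j :=
    congrFun (coe_basisOfTopLeSpanOfCardEqFinrank _ _ _) j
  rw [← hj, Module.Basis.coord_apply, Module.Basis.repr_self_apply]

lemma coord_sum_natCast_smul (k : Fin D.n → ℕ) (i : Fin D.n) :
    D.simpleBasis.coord i (∑ j, (k j : ℝ) • D.simpleRoot j) = k i := by
  simp only [map_sum, map_smul, coord_simpleRoot, smul_eq_mul, mul_ite, mul_one, mul_zero,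
    Finset.sum_ite_eq', Finset.mem_univ, if_true]

lemma coord_nonneg {α : V} (hα : α ∈ D.pos) (i : Fin D.n) : 0 ≤ D.simpleBasis.coord i α := by
  obtain ⟨k, rfl⟩ := D.pos_natCombo α hα
  rw [coord_sum_natCast_smul]
  exact Nat.cast_nonneg _

lemma inner_simpleRoot_coroot_simpleRoot_nonpos {i k : Fin D.n} (hik : i ≠ k) :
    ⟪D.simpleRoot i, coroot (D.simpleRoot k)⟫ ≤ (0 : ℝ) := by
  set r : ℝ := ⟪D.simpleRoot i, coroot (D.simpleRoot k)⟫ with hr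
  have coord_reflection (l : Fin D.n) :
      D.simpleBasis.coord l (D.simpleRoot i - r • D.simpleRoot k)
        = (if i = l then 1 else 0) - r * if k = l then 1 else 0 := by
    rw [map_sub, map_smul, coord_simpleRoot, coord_simpleRoot, smul_eq_mul]
  rcases D.pos_or_neg _ (D.reflect_mem _ (D.pos_subset (D.simpleRoot_mem k)) _
    (D.pos_subset (D.simpleRoot_mem i))) with hpos | hneg
  · have hk := D.coord_nonneg hpos k
    rw [← hr, coord_reflection, if_neg hik, if_pos rfl] at hk
    linarith
  · have hi := D.coord_nonneg hneg i
    rw [← hr, map_neg, coord_reflection, if_pos rfl, if_neg hik.symm] at hi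
    linarith

lemma inner_hshort_coroot_simpleRoot_nonneg (k : Fin D.n) :
    (0 : ℝ) ≤ ⟪D.hshort, coroot (D.simpleRoot k)⟫ := by
  have hnorm : ‖D.hshort - ⟪D.hshort, coroot (D.simpleRoot k)⟫ • D.simpleRoot k‖ = ‖D.hshort‖ := by
    rw [sub_inner_coroot_smul_eq_reflection, LinearIsometryEquiv.norm_map]
  obtain ⟨l, hl⟩ := D.hshort_highest _ (D.reflect_mem _ (D.pos_subset (D.simpleRoot_mem k)) _
    (D.pos_subset D.hshort_mem)) hnorm
  have hcoord := congrArg (D.simpleBasis.coord k) hl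
  rw [sub_sub_cancel, map_smul, coord_simpleRoot, if_pos rfl, smul_eq_mul, mul_one,
    coord_sum_natCast_smul] at hcoord
  rw [hcoord]
  exact Nat.cast_nonneg _

lemma inner_aSimple_nonpos {j k : Fin (D.n + 1)} (hjk : j ≠ k) :
    ⟪(D.aSimple j).1, (D.aSimple k).1⟫ ≤ (0 : ℝ) := by
  have simpleRoot_ne_zero (i : Fin D.n) : D.simpleRoot i ≠ 0 :=
    D.ne_zero _ (D.pos_subset (D.simpleRoot_mem i))
  have inner_neg_hshort_nonpos (i : Fin D.n) : ⟪-D.hshort, D.simpleRoot i⟫ ≤ (0 : ℝ) := by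
    rw [← inner_coroot_nonpos_iff (simpleRoot_ne_zero i), inner_neg_left]
    exact neg_nonpos.mpr (D.inner_hshort_coroot_simpleRoot_nonneg i)
  cases j using Fin.cases with
  | zero =>
    cases k using Fin.cases with
    | zero => exact absurd rfl hjk
    | succ i => exact inner_neg_hshort_nonpos i
  | succ i =>
    cases k using Fin.cases with
    | zero =>
      rw [real_inner_comm]
      exact inner_neg_hshort_nonpos i
    | succ l =>
      exact (inner_coroot_nonpos_iff (simpleRoot_ne_zero l)).mp
        (D.inner_simpleRoot_coroot_simpleRoot_nonpos fun h => hjk (congrArg Fin.succ h))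

lemma aSimple_ne_neg_aSimple (j k : Fin (D.n + 1)) : D.aSimple k ≠ -D.aSimple j := by
  intro h
  have hlevel : (D.aSimple k).2 = -(D.aSimple j).2 := congrArg Prod.snd h
  have hroot : (D.aSimple k).1 = -(D.aSimple j).1 := congrArg Prod.fst h
  cases j using Fin.cases with
  | zero => cases k using Fin.cases <;> simp [aSimple] at hlevel
  | succ i =>
    cases k using Fin.cases with
    | zero => simp [aSimple] at hlevel
    | succ l =>
      have hneg : D.simpleRoot l = -D.simpleRoot i := hroot
      exact D.pos_not_both _ (D.simpleRoot_mem i) (hneg ▸ D.simpleRoot_mem l)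

lemma isometry_of_mem_Wext {c : ℝ} {u : Equiv.Perm V} (hu : u ∈ D.Wext c) : Isometry u := by
  induction hu using Subgroup.closure_induction with
  | mem e he =>
    rcases he with ⟨a, -, he⟩ | ⟨lam, -, he⟩
    · rw [funext he]
      exact isometry_sAff c a
    · rw [funext he]
      exact isometry_add_right (c • lam)
  | one => exact isometry_id
  | mul x y _ _ hx hy => exact hx.comp hy
  | inv x _ hx => exact hx.right_inv x.apply_symm_apply

lemma affRefl_mem_Wext {c : ℝ} {a : V × ℤ} (ha : D.IsAffRoot a) : affRefl c a ∈ D.Wext c :=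
  Subgroup.subset_closure (Or.inl ⟨a, ha, fun _ => rfl⟩)

variable {D}

lemma IsMultiplicity.eq_of_odd {K : Type*} [Field K] {c : ℝ} {τ : V × ℤ → K}
    (hτ : D.IsMultiplicity c τ) {a b : V × ℤ} (ha : D.IsAffRoot a) (hb : D.IsAffRoot b) {m : ℕ}
    (hm : HasCoxeterExponent a.1 b.1 m) (hodd : Odd m) : τ a = τ b :=
  hτ.2 _ (mul_mem (D.affRefl_mem_Wext ha) (D.affRefl_mem_Wext hb)) a b ha hb
    (mapsRoot_affRefl_mul_affRefl (D.ne_zero _ ha) (hm.inner_coroot_eq_neg_one hodd)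
      (hm.symm.inner_coroot_eq_neg_one hodd))

theorem IsMultiplicity.altComp_hatT_comm {K : Type*} [Field K] {c : ℝ} (hc : c ≠ 0)
    {τ : V × ℤ → K} (hτ : D.IsMultiplicity c τ) {a b : V × ℤ} (ha : D.IsAffRoot a)
    (hb : D.IsAffRoot b) (hab : ⟪a.1, b.1⟫ ≤ (0 : ℝ)) (hne : b ≠ -a) {m : ℕ} (hm : 0 < m)
    (horder : orderOf (affRefl c a * affRefl c b) = m) :
    altComp (hatT c τ a) (hatT c τ b) m = altComp (hatT c τ b) (hatT c τ a) m := by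
  have ha0 := D.ne_zero _ ha
  have hb0 := D.ne_zero _ hb
  rcases D.eq_neg_or_exists_hasCoxeterExponent ha hb hab with hneg | ⟨m', hm'⟩
  · rw [orderOf_affRefl_mul_affRefl_of_eq_neg hc ha0 hneg hne] at horder
    exact absurd horder hm.ne
  · obtain rfl : m' = m := (hm'.orderOf_affRefl_mul_affRefl c ha0 hb0).symm.trans horder
    rw [← coe_hatTEnd, ← coe_hatTEnd, ← coe_altProd, ← coe_altProd,
      altProd_hatTEnd_comm hm' ha0 hb0 (hτ.1 a ha) (hτ.1 b hb) (hτ.eq_of_odd ha hb hm')]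

end RootSystemData

open RootSystemData in
theorem statement0_general {V K : Type*} [NormedAddCommGroup V] [InnerProductSpace ℝ V] [Field K]
    (D : RootSystemData V) {c : ℝ} (hc : c ≠ 0) {τ : V × ℤ → K} (hτ : D.IsMultiplicity c τ) :
    (∀ a, D.IsAffRoot a → ∀ f x,
      hatT c τ a (fun y => hatT c τ a f y + (τ a)⁻¹ * f y) x
        - τ a * (hatT c τ a f x + (τ a)⁻¹ * f x) = 0) ∧
    (∀ a b, D.IsAffRoot a → D.IsAffRoot b → ⟪a.1, b.1⟫ ≤ (0 : ℝ) → b ≠ -a → ∀ m, 0 < m →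
      orderOf (affRefl c a * affRefl c b) = m →
      altComp (hatT c τ a) (hatT c τ b) m = altComp (hatT c τ b) (hatT c τ a) m) ∧
    (∀ u ∈ D.Wext c, ∀ a b, D.IsAffRoot a → D.IsAffRoot b → mapsRoot c u a b → ∀ f x,
      hatT c τ a (fun y => f (u y)) (u⁻¹ x) = hatT c τ b f x) :=
  ⟨fun a ha f x => hatT_hatT_add_sub_eq_zero c (D.ne_zero _ ha) (hτ.1 a ha) f x,
    fun _ _ ha hb hab hne _ hm horder => hτ.altComp_hatT_comm hc ha hb hab hne hm horder,
    fun u hu a b ha hb h f x => hatT_inv_apply_of_mapsRoot (D.isometry_of_mem_Wext hu) h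
      (hτ.2 u hu a b ha hb h) f x⟩

open RootSystemData in
/-- the difference-reflection operators satisfy the defining relations of
the extended affine Hecke algebra (quadratic relations, braid relations, and
`Ω`-conjugation relations) on the space of functions `V → ℂ`. -/
theorem statement0 {V : Type*} [NormedAddCommGroup V] [InnerProductSpace ℝ V]
    (D : RootSystemData V) (c : ℝ) (hc : 0 < c)
    (τ : V × ℤ → ℂ) (hτ : D.IsMultiplicity c τ) :
    -- (i) quadratic relations (T̂_j - τ_j) ∘ (T̂_j + τ_j⁻¹) = 0
    (∀ j : Fin (D.n + 1), ∀ f : V → ℂ, ∀ x : V,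
      hatT c τ (D.aSimple j)
          (fun y => hatT c τ (D.aSimple j) f y + (τ (D.aSimple j))⁻¹ * f y) x
        - τ (D.aSimple j) *
            (hatT c τ (D.aSimple j) f x + (τ (D.aSimple j))⁻¹ * f x) = 0) ∧
    -- (ii) braid relations, with m = the (finite) order of s_{a_j} s_{a_k} in W
    (∀ j k : Fin (D.n + 1), j ≠ k → ∀ m : ℕ, 0 < m →
      (fun x => sAff c (D.aSimple j) (sAff c (D.aSimple k) x))^[m] = id →
      (∀ m' : ℕ, 0 < m' → m' < m →
        (fun x => sAff c (D.aSimple j) (sAff c (D.aSimple k) x))^[m'] ≠ id) →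
      altComp (hatT c τ (D.aSimple j)) (hatT c τ (D.aSimple k)) m
        = altComp (hatT c τ (D.aSimple k)) (hatT c τ (D.aSimple j)) m) ∧
    -- (iii) u ∘ T̂_j ∘ u⁻¹ = T̂_{u_j} for u ∈ Ω, where u a_j = a_{u_j}
    (∀ u : Equiv.Perm V, u ∈ D.Wext c → D.len c u = 0 →
      ∀ j k : Fin (D.n + 1),
        (∀ x : V, aval c (D.aSimple j) (u⁻¹ x) = aval c (D.aSimple k) x) →
        ∀ f : V → ℂ, ∀ x : V,
          hatT c τ (D.aSimple j) (fun y => f (u y)) (u⁻¹ x)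
            = hatT c τ (D.aSimple k) f x) := by
  obtain ⟨quadratic, braid, conjugation⟩ := statement0_general D hc.ne' hτ
  have hR := D.isAffRoot_aSimple
  exact ⟨fun j => quadratic _ (hR j),
    fun j k hjk m hm hid hmin => braid _ _ (hR j) (hR k) (D.inner_aSimple_nonpos hjk)
      (D.aSimple_ne_neg_aSimple j k) m hm (orderOf_affRefl_mul_affRefl_eq hm hid hmin),
    fun u hu _ j k h => conjugation u hu _ _ (hR j) (hR k) h⟩
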